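/- Transport relation for Hoffman's connected sum: let k be a nonempty index and let l be a nonempty index which is either admissible or equal to (1). Then, as an identity in [0,∞], Z^H(k_↑; l) = Z^H(k; ↑l) + T(k; ↑l). -/

import Mathlib

open scoped Classical ENNReal

noncomputable section

/-- Last value of a tuple, with default `d` for the empty tuple. -/
def lastD {c : ℕ} (d : ℕ) (f : Fin c → ℕ) : ℕ :=
  if h : 0 < c then f ⟨c - 1, Nat.sub_lt h Nat.one_pos⟩ else d

/-- First value of a tuple, with default `d` for the empty tuple. -/
def headD {c : ℕ} (d : ℕ) (f : Fin c → ℕ) : ℕ :=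
  if h : 0 < c then f ⟨0, h⟩ else d

/-- Hoffman's connected sum `Z^H(k; l)`: the sum in `[0,∞]` of
`(∏_{i<a} nᵢ^(-kᵢ)) · nₐ^(-(kₐ-1)) · (m₁ - nₐ)⁻¹ · ∏_j m_j^(-l_j)`
over `0 < n₁ < ⋯ < nₐ < m₁ < ⋯ < m_b`. -/
def ZH (k l : List ℕ) : ℝ≥0∞ :=
  ∑' p : (Fin k.length → ℕ) × (Fin l.length → ℕ),
    Set.indicator
      {p : (Fin k.length → ℕ) × (Fin l.length → ℕ) |
        (∀ i, 0 < p.1 i) ∧ StrictMono p.1 ∧ StrictMono p.2 ∧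
          lastD 0 p.1 < headD 0 p.2}
      (fun p =>
        (∏ i, ((p.1 i : ℝ≥0∞) ^ (if i.1 = k.length - 1 then k.get i - 1 else k.get i))⁻¹) *
          ((headD 0 p.2 - lastD 0 p.1 : ℕ) : ℝ≥0∞)⁻¹ *
          ∏ j, ((p.2 j : ℝ≥0∞) ^ l.get j)⁻¹) p

/-- The multiple-zeta-type series `T(k; l)` of the concatenated index `(k, l)`:
the sum in `[0,∞]` of `(∏ nᵢ^(-kᵢ)) · (∏ m_j^(-l_j))` over
`0 < n₁ < ⋯ < nₐ < m₁ < ⋯ < m_b`. -/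
def Tser (k l : List ℕ) : ℝ≥0∞ :=
  ∑' p : (Fin k.length → ℕ) × (Fin l.length → ℕ),
    Set.indicator
      {p : (Fin k.length → ℕ) × (Fin l.length → ℕ) |
        (∀ i, 0 < p.1 i) ∧ StrictMono p.1 ∧ StrictMono p.2 ∧
          lastD 0 p.1 < headD 0 p.2}
      (fun p => (∏ i, ((p.1 i : ℝ≥0∞) ^ k.get i)⁻¹) * ∏ j, ((p.2 j : ℝ≥0∞) ^ l.get j)⁻¹) p


/-- `k_↑`: increase the last entry of an index by `1` (`∅_↑ = ∅`). -/
def upLast : List ℕ → List ℕ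
  | [] => []
  | k => k.dropLast ++ [k.getLast! + 1]

/-- `↑k`: increase the first entry of an index by `1` (`↑∅ = ∅`). -/
def upFirst : List ℕ → List ℕ
  | [] => []
  | a :: k => (a + 1) :: k

/-!
Write `n` and `m` for the entries of the chain on either side of the connector, namely the last one
paired with `k` and the first one paired with `l`. The relation holds term by term: since
`n + (m - n) = m`, the partial fraction identity
`1 / (n * (m - n)) = 1 / ((m - n) * m) + 1 / (n * m)` moves one power of `n` to `m`.
-/

section InvMonomial

theorem ennreal_inv_mul_inv_eq (x y : ℝ≥0∞) : x⁻¹ * y⁻¹ = (x⁻¹ + y⁻¹) * (x + y)⁻¹ := by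
  rcases eq_or_ne x 0 with rfl | hx
  · simp
  rcases eq_or_ne y 0 with rfl | hy
  · simp [mul_comm]
  rcases eq_or_ne x ⊤ with rfl | hx_top
  · simp
  rcases eq_or_ne y ⊤ with rfl | hy_top
  · simp
  have inv_add_inv : x⁻¹ + y⁻¹ = x⁻¹ * y⁻¹ * (x + y) := by
    rw [mul_add, mul_right_comm, ENNReal.inv_mul_cancel hx hx_top, one_mul, mul_assoc,
      ENNReal.inv_mul_cancel hy hy_top, mul_one, add_comm]
  rw [inv_add_inv, mul_assoc,
    ENNReal.mul_inv_cancel (by simp [hx]) (ENNReal.add_ne_top.mpr ⟨hx_top, hy_top⟩), mul_one]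

/-- The inverse monomial `∏ᵢ nᵢ^(-eᵢ)` in `[0,∞]`, for a finite family `n` of natural numbers with
exponents `e`. -/
def invMonomial {ι : Type*} [Fintype ι] (e n : ι → ℕ) : ℝ≥0∞ :=
  ∏ i, ((n i : ℝ≥0∞) ^ e i)⁻¹

variable {ι κ : Type*} [Fintype ι] [DecidableEq ι] [Fintype κ] [DecidableEq κ]

theorem invMonomial_add_single (e n : ι → ℕ) (i : ι) :
    invMonomial (e + Pi.single i 1) n = invMonomial e n * (n i : ℝ≥0∞)⁻¹ := by
  simp only [invMonomial, ENNReal.inv_pow]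
  simp only [Pi.add_apply, pow_add, Finset.prod_mul_distrib, Pi.single_apply, pow_ite, pow_one,
    pow_zero, Fintype.prod_ite_eq']

theorem invMonomial_transport (e n : ι → ℕ) (f m : κ → ℕ) {i : ι} {j : κ} (h : n i ≤ m j) :
    invMonomial (e + Pi.single i 1) n * ((m j - n i : ℕ) : ℝ≥0∞)⁻¹ * invMonomial f m =
      invMonomial e n * ((m j - n i : ℕ) : ℝ≥0∞)⁻¹ * invMonomial (f + Pi.single j 1) m +
        invMonomial (e + Pi.single i 1) n * invMonomial (f + Pi.single j 1) m := by
  have partial_fractions := ennreal_inv_mul_inv_eq (n i) (m j - n i : ℕ)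
  rw [← Nat.cast_add, Nat.add_sub_cancel' h] at partial_fractions
  simp only [invMonomial_add_single]
  rw [mul_assoc (invMonomial e n), partial_fractions]
  ring

end InvMonomial

section ConnectedSum

/-- Pairs of tuples of natural numbers that concatenate to a strictly increasing chain
`0 < n₁ < ⋯ < n_{a+1} < m₁ < ⋯ < m_{b+1}`. -/
def chains (a b : ℕ) : Set ((Fin (a + 1) → ℕ) × (Fin (b + 1) → ℕ)) :=
  {p | (∀ i, 0 < p.1 i) ∧ StrictMono p.1 ∧ StrictMono p.2 ∧ p.1 (Fin.last a) < p.2 0}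

variable {a b : ℕ}

/-- Hoffman's connected sum as a function of the exponents that actually occur in its terms:
`n^(-e) · (m₁ - n_{a+1})⁻¹ · m^(-f)`, summed over the chains `(n, m)`. For `Z^H(k; l)` these are
`f = l` and `e = k` with its last entry lowered by one, so no truncated subtraction is needed in the
exponents. -/
def connectedSum (e : Fin (a + 1) → ℕ) (f : Fin (b + 1) → ℕ) : ℝ≥0∞ :=
  ∑' p, (chains a b).indicator (fun p => invMonomial e p.1 *
    ((p.2 0 - p.1 (Fin.last a) : ℕ) : ℝ≥0∞)⁻¹ * invMonomial f p.2) p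

/-- The multiple-zeta-type series `T(e; f)`: the sum of `n^(-e) · m^(-f)` over the chains
`(n, m)`. -/
def chainSum (e : Fin (a + 1) → ℕ) (f : Fin (b + 1) → ℕ) : ℝ≥0∞ :=
  ∑' p, (chains a b).indicator (fun p => invMonomial e p.1 * invMonomial f p.2) p

theorem connectedSum_add_single_last (e : Fin (a + 1) → ℕ) (f : Fin (b + 1) → ℕ) :
    connectedSum (e + Pi.single (Fin.last a) 1) f =
      connectedSum e (f + Pi.single 0 1) +
        chainSum (e + Pi.single (Fin.last a) 1) (f + Pi.single 0 1) := by
  simp only [connectedSum, chainSum]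
  simp only [← ENNReal.tsum_add, ← Set.indicator_add]
  congr 1
  refine Set.indicator_congr ?_
  rintro ⟨n, m⟩ ⟨-, -, -, last_lt_head⟩
  exact invMonomial_transport e n f m last_lt_head.le

end ConnectedSum

section OfFn

variable {a b : ℕ}

theorem exists_eq_ofFn_succ {α : Type*} {k : List α} (hk : k ≠ []) :
    ∃ (a : ℕ) (e : Fin (a + 1) → α), k = List.ofFn e := by
  obtain ⟨x, k, rfl⟩ := List.exists_cons_of_ne_nil hk
  exact ⟨k.length, (x :: k).get, (List.ofFn_get _).symm⟩

theorem getD_ofFn {α : Type*} (d : α) (e : Fin a → α) (i : Fin a) :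
    (List.ofFn e).getD i d = e i := by
  simp

theorem lastD_succ (d : ℕ) (n : Fin (a + 1) → ℕ) : lastD d n = n (Fin.last a) :=
  dif_pos a.succ_pos

theorem headD_succ (d : ℕ) (m : Fin (b + 1) → ℕ) : headD d m = m 0 :=
  dif_pos b.succ_pos

theorem upLast_of_ne_nil {k : List ℕ} (hk : k ≠ []) :
    upLast k = k.dropLast ++ [k.getLast hk + 1] := by
  cases k with
  | nil => contradiction
  | cons => rfl

theorem upLast_ofFn (e : Fin (a + 1) → ℕ) :
    upLast (List.ofFn e) = List.ofFn (e + Pi.single (Fin.last a) 1) := by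
  have ofFn_ne_nil : List.ofFn e ≠ [] := by simp
  rw [upLast_of_ne_nil ofFn_ne_nil, List.getLast_ofFn_succ]
  simp [List.ofFn_succ_last, -List.ofFn_succ]

theorem upFirst_ofFn (f : Fin (b + 1) → ℕ) :
    upFirst (List.ofFn f) = List.ofFn (f + Pi.single 0 1) := by
  simp [upFirst, List.ofFn_succ]

theorem Tser_ofFn (e : Fin (a + 1) → ℕ) (f : Fin (b + 1) → ℕ) :
    Tser (List.ofFn e) (List.ofFn f) = chainSum e f := by
  -- `getD` has no bound proof, so the lengths can be rewritten in the index types of the sum.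
  simp only [Tser, List.get_eq_getElem, ← List.getD_eq_getElem _ 0]
  rw [List.length_ofFn, List.length_ofFn]
  simp only [getD_ofFn, lastD_succ, headD_succ]
  rfl

theorem ZH_ofFn (e : Fin (a + 1) → ℕ) (f : Fin (b + 1) → ℕ) :
    ZH (List.ofFn (e + Pi.single (Fin.last a) 1)) (List.ofFn f) = connectedSum e f := by
  have reduced_exponent (i : Fin (a + 1)) :
      (if (i : ℕ) = a then (e + Pi.single (Fin.last a) 1 : Fin (a + 1) → ℕ) i - 1
        else (e + Pi.single (Fin.last a) 1 : Fin (a + 1) → ℕ) i) = e i := by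
    cases i using Fin.lastCases with
    | last => simp
    | cast i => simp [i.is_lt.ne]
  simp only [ZH, List.get_eq_getElem, ← List.getD_eq_getElem _ 0]
  rw [List.length_ofFn, List.length_ofFn]
  simp only [getD_ofFn, lastD_succ, headD_succ, Nat.add_sub_cancel, reduced_exponent]
  rfl

end OfFn

theorem ZH_transport_up_general (k l : List ℕ) (hk : k ≠ []) (hk1 : 1 ≤ k.getLast hk)
    (hl : l ≠ []) :
    ZH (upLast k) l = ZH k (upFirst l) + Tser k (upFirst l) := by
  obtain ⟨a, k, rfl⟩ := exists_eq_ofFn_succ hk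
  obtain ⟨b, f, rfl⟩ := exists_eq_ofFn_succ hl
  obtain ⟨e, rfl⟩ : ∃ e : Fin (a + 1) → ℕ, k = e + Pi.single (Fin.last a) 1 := by
    rw [List.getLast_ofFn_succ] at hk1
    have single_le : Pi.single (Fin.last a) 1 ≤ k :=
      update_le_iff.mpr ⟨hk1, fun _ _ => Nat.zero_le _⟩
    exact ⟨k - Pi.single (Fin.last a) 1, (tsub_add_cancel_of_le single_le).symm⟩
  rw [upLast_ofFn, upFirst_ofFn, ZH_ofFn, ZH_ofFn, Tser_ofFn, connectedSum_add_single_last]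

/-- **Transport relation for Hoffman's connected sum:**
for a nonempty index `k` and a nonempty index `l` which is admissible or equal to `(1)`,
`Z^H(k_↑; l) = Z^H(k; ↑l) + T(k; ↑l)` in `[0,∞]`. -/
theorem ZH_transport_up (k l : List ℕ)
    (hk : k ≠ []) (hk1 : ∀ i ∈ k, 1 ≤ i)
    (hl : l ≠ []) (hl1 : ∀ i ∈ l, 1 ≤ i)
    (hla : 2 ≤ l.getLast hl ∨ l = [1]) :
    ZH (upLast k) l = ZH k (upFirst l) + Tser k (upFirst l) :=
  ZH_transport_up_general k l hk (hk1 _ (k.getLast_mem hk)) hl
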